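/- I_b^{(∞)} is convex: for bipartite states ρ_i and weights p_i, I_b^{(∞)}(∑_i p_i ρ_i) ≤ ∑_i p_i I_b^{(∞)}(ρ_i). -/

import Mathlib

open scoped BigOperators Kronecker ComplexOrder
open Matrix Filter Topology

noncomputable section

/-- Shannon entropy (log base 2) of a finitely supported distribution. -/
def shannon {I : Type} [Fintype I] (p : I → ℝ) : ℝ := -∑ i, p i * Real.logb 2 (p i)

/-- `p` is a probability distribution. -/
def IsProbDist {I : Type} [Fintype I] (p : I → ℝ) : Prop :=
  (∀ i, 0 ≤ p i) ∧ ∑ i, p i = 1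

/-- First marginal of a joint distribution. -/
def margA {I J : Type} [Fintype J] (p : I × J → ℝ) : I → ℝ := fun i => ∑ j, p (i, j)

/-- Second marginal of a joint distribution. -/
def margB {I J : Type} [Fintype I] (p : I × J → ℝ) : J → ℝ := fun j => ∑ i, p (i, j)

/-- Classical mutual information of a joint distribution. -/
def classMI {I J : Type} [Fintype I] [Fintype J] (p : I × J → ℝ) : ℝ :=
  shannon (margA p) + shannon (margB p) - shannon p

/-- Kullback-Leibler divergence (log base 2). -/
def klDiv {I : Type} [Fintype I] (p q : I → ℝ) : ℝ := ∑ i, p i * Real.logb 2 (p i / q i)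

/-- A density operator: positive semidefinite with unit trace. -/
def IsDensity {n : Type} [Fintype n] (ρ : Matrix n n ℂ) : Prop :=
  ρ.PosSemidef ∧ ρ.trace = 1

/-- Von Neumann entropy (log base 2) via the eigenvalues of a Hermitian matrix. -/
def vnEntropy {n : Type} [Fintype n] [DecidableEq n] (ρ : Matrix n n ℂ) : ℝ :=
  if h : ρ.IsHermitian then -∑ i, h.eigenvalues i * Real.logb 2 (h.eigenvalues i) else 0

/-- Partial trace over the second tensor factor. -/
def ptraceB {A B : Type} [Fintype B] (ρ : Matrix (A × B) (A × B) ℂ) : Matrix A A ℂ :=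
  Matrix.of fun a a' => ∑ b, ρ (a, b) (a', b)

/-- Partial trace over the first tensor factor. -/
def ptraceA {A B : Type} [Fintype A] (ρ : Matrix (A × B) (A × B) ℂ) : Matrix B B ℂ :=
  Matrix.of fun b b' => ∑ a, ρ (a, b) (a, b')

/-- Quantum mutual information I(A:B) = S(ρ_A) + S(ρ_B) - S(ρ_{AB}). -/
def mutInfo {A B : Type} [Fintype A] [Fintype B] [DecidableEq A] [DecidableEq B]
    (ρ : Matrix (A × B) (A × B) ℂ) : ℝ :=
  vnEntropy (ptraceB ρ) + vnEntropy (ptraceA ρ) - vnEntropy ρ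

/-- Tensor product of two bipartite states, with the cut (A₁A₂ : B₁B₂). -/
def tens2 {A₁ B₁ A₂ B₂ : Type}
    (ρ : Matrix (A₁ × B₁) (A₁ × B₁) ℂ) (σ : Matrix (A₂ × B₂) (A₂ × B₂) ℂ) :
    Matrix ((A₁ × A₂) × (B₁ × B₂)) ((A₁ × A₂) × (B₁ × B₂)) ℂ :=
  Matrix.of fun x y => ρ (x.1.1, x.2.1) (y.1.1, y.2.1) * σ (x.1.2, x.2.2) (y.1.2, y.2.2)

/-- n-fold tensor power of a bipartite state, with the A^n : B^n cut. -/
def tpow {A B : Type} (σ : Matrix (A × B) (A × B) ℂ) (n : ℕ) :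
    Matrix ((Fin n → A) × (Fin n → B)) ((Fin n → A) × (Fin n → B)) ℂ :=
  Matrix.of fun x y => ∏ i, σ (x.1 i, x.2 i) (y.1 i, y.2 i)

/-- Reduced state of the k-th copy (partial trace over all other copies). -/
def copyMarginal {A B : Type} [Fintype A] [Fintype B] [DecidableEq A] [DecidableEq B] {n : ℕ}
    (ρ : Matrix ((Fin n → A) × (Fin n → B)) ((Fin n → A) × (Fin n → B)) ℂ) (k : Fin n) :
    Matrix (A × B) (A × B) ℂ :=
  Matrix.of fun x y => ∑ f : Fin n → A, ∑ g : Fin n → B,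
    if f k = x.1 ∧ g k = x.2 then
      ρ (f, g) (Function.update f k y.1, Function.update g k y.2) else 0

/-- `τ` is an n-copy broadcast state of `ρ`. -/
def IsBroadcast {A B : Type} [Fintype A] [Fintype B] [DecidableEq A] [DecidableEq B] (n : ℕ)
    (τ : Matrix ((Fin n → A) × (Fin n → B)) ((Fin n → A) × (Fin n → B)) ℂ)
    (ρ : Matrix (A × B) (A × B) ℂ) : Prop :=
  IsDensity τ ∧ ∀ k : Fin n, copyMarginal τ k = ρ

/-- n-copy broadcast mutual information (I_b)_n. -/
def Ib {A B : Type} [Fintype A] [Fintype B] [DecidableEq A] [DecidableEq B] (n : ℕ)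
    (ρ : Matrix (A × B) (A × B) ℂ) : ℝ :=
  sInf {x | ∃ τ, IsBroadcast n τ ρ ∧ x = mutInfo τ}

/-- Partial trace of a state on (A A' : B B') over the primed (ancilla) systems. -/
def ptracePrime {A B A' B' : Type} [Fintype A'] [Fintype B']
    (τ : Matrix ((A × A') × (B × B')) ((A × A') × (B × B')) ℂ) :
    Matrix (A × B) (A × B) ℂ :=
  Matrix.of fun x y => ∑ a', ∑ b', τ ((x.1, a'), (x.2, b')) ((y.1, a'), (y.2, b'))

/-- Partial trace of a state on (A A' : B B') over the unprimed systems. -/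
def ptraceMain {A B A' B' : Type} [Fintype A] [Fintype B]
    (τ : Matrix ((A × A') × (B × B')) ((A × A') × (B × B')) ℂ) :
    Matrix (A' × B') (A' × B') ℂ :=
  Matrix.of fun x y => ∑ a, ∑ b, τ ((a, x.1), (b, x.2)) ((a, y.1), (b, y.2))

/-- Conditional entanglement of mutual information (CEMI). -/
def EI {A B : Type} [Fintype A] [Fintype B] [DecidableEq A] [DecidableEq B]
    (ρ : Matrix (A × B) (A × B) ℂ) : ℝ :=
  (1 / 2) * sInf {x | ∃ (dA dB : ℕ)
    (τ : Matrix ((A × Fin dA) × (B × Fin dB)) ((A × Fin dA) × (B × Fin dB)) ℂ),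
    IsDensity τ ∧ ptracePrime τ = ρ ∧ x = mutInfo τ - mutInfo (ptraceMain τ)}

/-- Classical squashed entanglement, via the ensemble formula. -/
def EsqC {A B : Type} [Fintype A] [Fintype B] [DecidableEq A] [DecidableEq B]
    (ρ : Matrix (A × B) (A × B) ℂ) : ℝ :=
  (1 / 2) * sInf {x | ∃ (m : ℕ) (p : Fin m → ℝ) (σ : Fin m → Matrix (A × B) (A × B) ℂ),
    (∀ k, 0 ≤ p k) ∧ (∑ k, p k = 1) ∧ (∀ k, IsDensity (σ k)) ∧
    (∑ k, (p k : ℂ) • σ k = ρ) ∧ x = ∑ k, p k * mutInfo (σ k)}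

/-- Separability of a bipartite state. -/
def Separable {A B : Type} [Fintype A] [Fintype B]
    (ρ : Matrix (A × B) (A × B) ℂ) : Prop :=
  ∃ (m : ℕ) (p : Fin m → ℝ) (σA : Fin m → Matrix A A ℂ) (σB : Fin m → Matrix B B ℂ),
    (∀ k, 0 ≤ p k) ∧ (∑ k, p k = 1) ∧ (∀ k, IsDensity (σA k) ∧ IsDensity (σB k)) ∧
    ρ = ∑ k, (p k : ℂ) • (σA k ⊗ₖ σB k)

/-- A finite POVM. -/
def IsPOVM {A ι : Type} [Fintype A] [Fintype ι] [DecidableEq A]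
    (M : ι → Matrix A A ℂ) : Prop :=
  (∀ i, (M i).PosSemidef) ∧ ∑ i, M i = 1

/-- Outcome distribution of a local product measurement. -/
def measProb {A B ι κ : Type} [Fintype A] [Fintype B]
    (M : ι → Matrix A A ℂ) (N : κ → Matrix B B ℂ)
    (ρ : Matrix (A × B) (A × B) ℂ) : ι × κ → ℝ :=
  fun x => (((M x.1 ⊗ₖ N x.2) * ρ).trace).re

/-- Completeness condition for a family of Kraus operators. -/
def IsKraus {A A' ι : Type} [Fintype A] [Fintype A'] [Fintype ι] [DecidableEq A]
    (K : ι → Matrix A' A ℂ) : Prop :=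
  ∑ i, (K i)ᴴ * K i = 1

/-- Action of the product channel Λ_A ⊗ Λ_B (given by Kraus operators) on a bipartite state. -/
def localApply {A B A' B' ι κ : Type} [Fintype A] [Fintype B] [Fintype ι] [Fintype κ]
    (K : ι → Matrix A' A ℂ) (L : κ → Matrix B' B ℂ)
    (ρ : Matrix (A × B) (A × B) ℂ) : Matrix (A' × B') (A' × B') ℂ :=
  ∑ i, ∑ j, (K i ⊗ₖ L j) * ρ * (K i ⊗ₖ L j)ᴴ

/-- Measured relative entropy distance to separable states (with optimization over local POVMs). -/
def measREE {A B : Type} [Fintype A] [Fintype B] [DecidableEq A] [DecidableEq B]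
    (ρ : Matrix (A × B) (A × B) ℂ) : ℝ :=
  sInf {x | ∃ σ : Matrix (A × B) (A × B) ℂ, IsDensity σ ∧ Separable σ ∧
    x = sSup {y | ∃ (m m' : ℕ) (M : Fin m → Matrix A A ℂ) (N : Fin m' → Matrix B B ℂ),
      IsPOVM M ∧ IsPOVM N ∧ y = klDiv (measProb M N ρ) (measProb M N σ)}}

theorem nml_eq (x : ℝ) : -(x * Real.logb 2 x) = Real.negMulLog x / Real.log 2 := by
  simp only [Real.negMulLog, Real.logb]; ring

theorem vn_eq {n : Type} [Fintype n] [DecidableEq n] {M : Matrix n n ℂ} (h : M.IsHermitian) :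
    vnEntropy M = (∑ i, Real.negMulLog (h.eigenvalues i)) / Real.log 2 := by
  rw [vnEntropy, dif_pos h, ← Finset.sum_neg_distrib, Finset.sum_div]
  exact Finset.sum_congr rfl fun i _ => nml_eq _

/-- spectral decomposition -/
theorem spec_form {n : Type} [Fintype n] [DecidableEq n] {M : Matrix n n ℂ} (h : M.IsHermitian) :
    M = (h.eigenvectorUnitary : Matrix n n ℂ) * diagonal (fun i => (h.eigenvalues i : ℂ)) *
      (h.eigenvectorUnitary : Matrix n n ℂ)ᴴ := by
  have := h.spectral_theorem
  rw [Unitary.conjStarAlgAut_apply] at this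
  exact this

theorem uni_row {n : Type} [Fintype n] [DecidableEq n] {W : Matrix n n ℂ} (h : W * Wᴴ = 1)
    (j : n) : ∑ m, Complex.normSq (W j m) = 1 := by
  have := congrFun (congrFun h j) j
  simp only [Matrix.mul_apply, conjTranspose_apply, one_apply_eq, RCLike.star_def,
    Complex.mul_conj] at this
  exact_mod_cast this

theorem uni_col {n : Type} [Fintype n] [DecidableEq n] {W : Matrix n n ℂ} (h : Wᴴ * W = 1)
    (j : n) : ∑ m, Complex.normSq (W m j) = 1 := by
  have := congrFun (congrFun h j) j
  simp only [Matrix.mul_apply, conjTranspose_apply, one_apply_eq, RCLike.star_def,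
    ← Complex.normSq_eq_conj_mul_self] at this
  exact_mod_cast this

theorem peierls {n : Type} [Fintype n] [DecidableEq n] {M : Matrix n n ℂ} (h : M.PosSemidef)
    (V : Matrix n n ℂ) (h1 : Vᴴ * V = 1) (h2 : V * Vᴴ = 1) :
    ∑ i, Real.negMulLog (h.1.eigenvalues i) ≤ ∑ j, Real.negMulLog ((Vᴴ * M * V) j j).re := by
  set U : Matrix n n ℂ := (h.1.eigenvectorUnitary : Matrix n n ℂ) with hU
  have hU1 : Uᴴ * U = 1 := Unitary.coe_star_mul_self h.1.eigenvectorUnitary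
  have hU2 : U * Uᴴ = 1 := Unitary.coe_mul_star_self h.1.eigenvectorUnitary
  set W := Vᴴ * U with hW
  have hW1 : Wᴴ * W = 1 := by
    rw [hW, conjTranspose_mul, conjTranspose_conjTranspose, Matrix.mul_assoc, ← Matrix.mul_assoc V,
      h2, Matrix.one_mul, hU1]
  have hW2 : W * Wᴴ = 1 := by
    rw [hW, conjTranspose_mul, conjTranspose_conjTranspose, Matrix.mul_assoc, ← Matrix.mul_assoc U,
      hU2, Matrix.one_mul, h1]
  have hd : ∀ j, ((Vᴴ * M * V) j j).re = ∑ m, Complex.normSq (W j m) * h.1.eigenvalues m := by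
    intro j
    have e : Vᴴ * M * V = W * diagonal (fun i => (h.1.eigenvalues i : ℂ)) * Wᴴ := by
      conv_lhs => rw [spec_form h.1]
      rw [hW, conjTranspose_mul, conjTranspose_conjTranspose]
      simp only [Matrix.mul_assoc, hU]
    rw [e, Matrix.mul_apply, Complex.re_sum]
    refine Finset.sum_congr rfl fun m _ => ?_
    rw [Matrix.mul_diagonal, conjTranspose_apply]
    have e3 : W j m * star (W j m) = (Complex.normSq (W j m) : ℂ) := Complex.mul_conj _
    rw [mul_right_comm, e3, ← Complex.ofReal_mul, Complex.ofReal_re]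
  calc _ = ∑ i, ∑ j, Complex.normSq (W j i) * Real.negMulLog (h.1.eigenvalues i) := by
        refine Finset.sum_congr rfl fun i _ => ?_
        rw [← Finset.sum_mul, uni_col hW1, one_mul]
    _ = ∑ j, ∑ i, Complex.normSq (W j i) * Real.negMulLog (h.1.eigenvalues i) :=
        Finset.sum_comm
    _ ≤ _ := by
        refine Finset.sum_le_sum fun j _ => ?_
        rw [hd]
        have := Real.concaveOn_negMulLog.le_map_sum (t := Finset.univ)
          (w := fun m => Complex.normSq (W j m)) (p := h.1.eigenvalues)
          (fun m _ => Complex.normSq_nonneg _) (uni_row hW2 j)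
          (fun m _ => h.eigenvalues_nonneg m)
        simpa only [smul_eq_mul] using this

theorem mix_psd {n K : Type} [Fintype n] [Fintype K] (p : K → ℝ) (hp : ∀ k, 0 ≤ p k)
    (σ : K → Matrix n n ℂ) (hσ : ∀ k, (σ k).PosSemidef) :
    (∑ k, (p k : ℂ) • σ k).PosSemidef :=
  posSemidef_sum _ fun k _ => (hσ k).smul (by exact_mod_cast hp k)

theorem vn_concave {n K : Type} [Fintype n] [DecidableEq n] [Fintype K]
    (p : K → ℝ) (hp : ∀ k, 0 ≤ p k) (hp1 : ∑ k, p k = 1)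
    (σ : K → Matrix n n ℂ) (hσ : ∀ k, (σ k).PosSemidef) :
    ∑ k, p k * vnEntropy (σ k) ≤ vnEntropy (∑ k, (p k : ℂ) • σ k) := by
  have hM := mix_psd p hp σ hσ
  rw [vn_eq hM.1]
  simp only [fun k => vn_eq (hσ k).1, mul_div_assoc', ← Finset.sum_div]
  have hl : 0 < Real.log 2 := Real.log_pos (by norm_num)
  refine div_le_div_of_nonneg_right ?_ hl.le
  set V : Matrix n n ℂ := (hM.1.eigenvectorUnitary : Matrix n n ℂ) with hV
  have h1 : Vᴴ * V = 1 := Unitary.coe_star_mul_self hM.1.eigenvectorUnitary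
  have h2 : V * Vᴴ = 1 := Unitary.coe_mul_star_self hM.1.eigenvectorUnitary
  have hd : ∀ j, hM.1.eigenvalues j = ∑ k, p k * ((Vᴴ * σ k * V) j j).re := by
    intro j
    have e : Vᴴ * (∑ k, (p k : ℂ) • σ k) * V = diagonal (fun i => (hM.1.eigenvalues i : ℂ)) := by
      conv_lhs => rw [spec_form hM.1]
      rw [← hV]
      calc _ = (Vᴴ * V) * diagonal (fun i => (hM.1.eigenvalues i : ℂ)) * (Vᴴ * V) := by
            simp only [Matrix.mul_assoc]
        _ = _ := by rw [h1, Matrix.one_mul, Matrix.mul_one]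
    have e2 := congrArg Complex.re (congrFun (congrFun e j) j)
    rw [diagonal_apply_eq, Complex.ofReal_re] at e2
    rw [← e2, Matrix.mul_sum, Matrix.sum_mul, Matrix.sum_apply, Complex.re_sum]
    refine Finset.sum_congr rfl fun k _ => ?_
    rw [Matrix.mul_smul, Matrix.smul_mul, Matrix.smul_apply, smul_eq_mul, Complex.re_ofReal_mul]
  calc _ ≤ ∑ k, p k * ∑ j, Real.negMulLog ((Vᴴ * σ k * V) j j).re :=
        Finset.sum_le_sum fun k _ => mul_le_mul_of_nonneg_left (peierls (hσ k) V h1 h2) (hp k)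
    _ = ∑ j, ∑ k, p k * Real.negMulLog ((Vᴴ * σ k * V) j j).re := by
        simp only [Finset.mul_sum]; exact Finset.sum_comm
    _ ≤ _ := by
        refine Finset.sum_le_sum fun j _ => ?_
        rw [hd]
        have := Real.concaveOn_negMulLog.le_map_sum (t := Finset.univ)
          (w := p) (p := fun k => ((Vᴴ * σ k * V) j j).re)
          (fun m _ => hp m) hp1
          (fun k _ => by
            have := ((hσ k).conjTranspose_mul_mul_same V).diag_nonneg (i := j)
            exact (Complex.le_def.1 this).1)
        simpa only [smul_eq_mul] using this

theorem ent_comm {n m : Type} [Fintype n] [DecidableEq n] [Fintype m] [DecidableEq m]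
    (X : Matrix n m ℂ) (h1 : (X * Xᴴ).IsHermitian) (h2 : (Xᴴ * X).IsHermitian) :
    ∑ i, Real.negMulLog (h1.eigenvalues i) = ∑ i, Real.negMulLog (h2.eigenvalues i) := by
  have h := congrArg Polynomial.roots (Matrix.charpoly_mul_comm' X Xᴴ)
  rw [Polynomial.roots_mul (mul_ne_zero (pow_ne_zero _ Polynomial.X_ne_zero)
      (Matrix.charpoly_monic _).ne_zero),
    Polynomial.roots_mul (mul_ne_zero (pow_ne_zero _ Polynomial.X_ne_zero)
      (Matrix.charpoly_monic _).ne_zero), h1.roots_charpoly_eq_eigenvalues,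
      h2.roots_charpoly_eq_eigenvalues, Polynomial.roots_X_pow, Polynomial.roots_X_pow] at h
  have h' := congrArg (fun s : Multiset ℂ => (s.map (fun z => Real.negMulLog z.re)).sum) h
  simpa [Multiset.map_nsmul, Multiset.sum_nsmul] using h'

theorem vn_mix_upper {n K : Type} [Fintype n] [DecidableEq n] [Fintype K]
    (p : K → ℝ) (hp : ∀ k, 0 ≤ p k)
    (σ : K → Matrix n n ℂ) (hσ : ∀ k, IsDensity (σ k)) :
    vnEntropy (∑ k, (p k : ℂ) • σ k) ≤ ∑ k, p k * vnEntropy (σ k) + shannon p := by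
  classical
  have hM := mix_psd p hp σ fun k => (hσ k).1
  have hs : shannon p = (∑ k, Real.negMulLog (p k)) / Real.log 2 := by
    rw [shannon, ← Finset.sum_neg_distrib, Finset.sum_div]
    exact Finset.sum_congr rfl fun i _ => nml_eq _
  rw [vn_eq hM.1, hs]
  simp only [fun k => vn_eq (hσ k).1.1, mul_div_assoc', ← Finset.sum_div]
  rw [← add_div]
  have hl : 0 < Real.log 2 := Real.log_pos (by norm_num)
  refine div_le_div_of_nonneg_right ?_ hl.le
  let U : K → Matrix n n ℂ := fun k => (hσ k).1.1.eigenvectorUnitary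
  let ev : K → n → ℝ := fun k => (hσ k).1.1.eigenvalues
  have hev : ∀ k m, 0 ≤ ev k m := fun k m => (hσ k).1.eigenvalues_nonneg m
  have hev1 : ∀ k, ∑ m, ev k m = 1 := fun k => by
    have := (hσ k).2.symm.trans (hσ k).1.1.trace_eq_sum_eigenvalues
    have h2 := congrArg Complex.re this
    simpa using h2.symm
  let X : Matrix n (K × n) ℂ := Matrix.of fun i x =>
    U x.1 i x.2 * (Real.sqrt (p x.1 * ev x.1 x.2) : ℂ)
  have hq : ∀ k m, ((Real.sqrt (p k * ev k m) : ℂ)) * (Real.sqrt (p k * ev k m) : ℂ)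
      = (p k : ℂ) * ev k m := fun k m => by
    rw [← Complex.ofReal_mul, Real.mul_self_sqrt (mul_nonneg (hp k) (hev k m)), Complex.ofReal_mul]
  have hX : ∑ k, (p k : ℂ) • σ k = X * Xᴴ := by
    ext i j
    rw [Matrix.mul_apply, Fintype.sum_prod_type, Matrix.sum_apply]
    refine Finset.sum_congr rfl fun k _ => ?_
    conv_lhs => rw [spec_form (hσ k).1.1]
    rw [Matrix.smul_apply, Matrix.mul_apply, smul_eq_mul, Finset.mul_sum]
    refine Finset.sum_congr rfl fun m _ => ?_
    simp only [Matrix.mul_diagonal, conjTranspose_apply, X, Matrix.of_apply, star_mul',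
      RCLike.star_def, Complex.conj_ofReal]
    linear_combination (-(U k i m) * (starRingEnd ℂ) (U k j m)) * hq k m
  have hG : (Xᴴ * X).PosSemidef := posSemidef_conjTranspose_mul_self X
  have hGd : ∀ x : K × n, ((Xᴴ * X) x x).re = p x.1 * ev x.1 x.2 := by
    rintro ⟨k, m⟩
    have hU1 : (U k)ᴴ * U k = 1 := Unitary.coe_star_mul_self (hσ k).1.1.eigenvectorUnitary
    have h3 := uni_col hU1 m
    have : (Xᴴ * X) (k, m) (k, m) = ((p k * ev k m * ∑ i, Complex.normSq (U k i m) : ℝ) : ℂ) := by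
      rw [Matrix.mul_apply, Finset.mul_sum, Complex.ofReal_sum]
      refine Finset.sum_congr rfl fun i _ => ?_
      simp only [conjTranspose_apply, X, Matrix.of_apply, star_mul',
        RCLike.star_def, Complex.conj_ofReal]
      push_cast
      rw [Complex.normSq_eq_conj_mul_self]
      linear_combination ((U k i m) * (starRingEnd ℂ) (U k i m)) * hq k m
    rw [this, h3, mul_one, Complex.ofReal_re]
  have key : ∑ i, Real.negMulLog (hM.1.eigenvalues i)
      = ∑ i, Real.negMulLog (hG.1.eigenvalues i) := by
    rw [← ent_comm X (hX ▸ hM.1) hG.1]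
    congr! 4
  rw [key]
  refine (peierls hG 1 (by simp) (by simp)).trans ?_
  simp only [conjTranspose_one, Matrix.one_mul, Matrix.mul_one, hGd]
  rw [Fintype.sum_prod_type, ← Finset.sum_add_distrib]
  refine Finset.sum_le_sum fun k _ => ?_
  simp only [Real.negMulLog_mul]
  rw [Finset.sum_add_distrib, ← Finset.sum_mul, hev1, one_mul, ← Finset.mul_sum, add_comm]

theorem eig_sum {n : Type} [Fintype n] [DecidableEq n] {M : Matrix n n ℂ} (h : IsDensity M) :
    ∑ m, h.1.1.eigenvalues m = 1 := by
  have := h.2.symm.trans h.1.1.trace_eq_sum_eigenvalues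
  have h2 := congrArg Complex.re this
  simpa using h2.symm

theorem vn_nonneg {n : Type} [Fintype n] [DecidableEq n] {M : Matrix n n ℂ} (h : IsDensity M) :
    0 ≤ vnEntropy M := by
  rw [vn_eq h.1.1]
  refine div_nonneg (Finset.sum_nonneg fun i _ => ?_) (Real.log_pos (by norm_num)).le
  refine Real.negMulLog_nonneg (h.1.eigenvalues_nonneg i) ?_
  rw [← eig_sum h]
  exact Finset.single_le_sum (fun j _ => h.1.eigenvalues_nonneg j) (Finset.mem_univ i)

theorem vn_le {n : Type} [Fintype n] [DecidableEq n] {M : Matrix n n ℂ} (h : IsDensity M) :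
    vnEntropy M ≤ (Fintype.card n : ℝ) / Real.log 2 := by
  rw [vn_eq h.1.1]
  refine div_le_div_of_nonneg_right ?_ (Real.log_pos (by norm_num)).le
  calc _ ≤ ∑ _i : n, (1 : ℝ) := Finset.sum_le_sum fun i _ => by
        have := Real.negMulLog_le_one_sub_self (h.1.eigenvalues_nonneg i)
        have := h.1.eigenvalues_nonneg i
        linarith
    _ = _ := by simp

theorem ptraceB_density {A B : Type} [Fintype A] [Fintype B]
    {τ : Matrix (A × B) (A × B) ℂ} (h : IsDensity τ) : IsDensity (ptraceB τ) := by
  constructor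
  · have : ptraceB τ = ∑ b, τ.submatrix (fun a => (a, b)) (fun a => (a, b)) := by
      ext i j; simp [ptraceB, Matrix.sum_apply]
    rw [this]
    exact posSemidef_sum _ fun b _ => h.1.submatrix _
  · rw [← h.2]; simp [Matrix.trace, ptraceB, Fintype.sum_prod_type]

theorem ptraceA_density {A B : Type} [Fintype A] [Fintype B]
    {τ : Matrix (A × B) (A × B) ℂ} (h : IsDensity τ) : IsDensity (ptraceA τ) := by
  constructor
  · have : ptraceA τ = ∑ a, τ.submatrix (fun b => (a, b)) (fun b => (a, b)) := by
      ext i j; simp [ptraceA, Matrix.sum_apply]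
    rw [this]
    exact posSemidef_sum _ fun b _ => h.1.submatrix _
  · rw [← h.2]; simp [Matrix.trace, ptraceA, Fintype.sum_prod_type_right]

theorem ptraceB_mix {A B K : Type} [Fintype A] [Fintype B] [Fintype K] (p : K → ℝ)
    (τ : K → Matrix (A × B) (A × B) ℂ) :
    ptraceB (∑ k, (p k : ℂ) • τ k) = ∑ k, (p k : ℂ) • ptraceB (τ k) := by
  ext i j
  simp only [ptraceB, Matrix.sum_apply, Matrix.of_apply, Matrix.smul_apply, Finset.smul_sum]
  exact Finset.sum_comm

theorem ptraceA_mix {A B K : Type} [Fintype A] [Fintype B] [Fintype K] (p : K → ℝ)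
    (τ : K → Matrix (A × B) (A × B) ℂ) :
    ptraceA (∑ k, (p k : ℂ) • τ k) = ∑ k, (p k : ℂ) • ptraceA (τ k) := by
  ext i j
  simp only [ptraceA, Matrix.sum_apply, Matrix.of_apply, Matrix.smul_apply, Finset.smul_sum]
  exact Finset.sum_comm

theorem mutInfo_mix {A B K : Type} [Fintype A] [Fintype B] [DecidableEq A] [DecidableEq B]
    [Fintype K] (p : K → ℝ) (hp : ∀ k, 0 ≤ p k) (hp1 : ∑ k, p k = 1)
    (τ : K → Matrix (A × B) (A × B) ℂ) (hτ : ∀ k, IsDensity (τ k)) :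
    mutInfo (∑ k, (p k : ℂ) • τ k) ≤ ∑ k, p k * mutInfo (τ k) + 2 * shannon p := by
  have h1 := vn_mix_upper p hp _ fun k => ptraceB_density (hτ k)
  have h2 := vn_mix_upper p hp _ fun k => ptraceA_density (hτ k)
  have h3 := vn_concave p hp hp1 τ fun k => (hτ k).1
  simp only [mutInfo, ptraceA_mix, ptraceB_mix, mul_add, mul_sub, Finset.sum_add_distrib,
    Finset.sum_sub_distrib]
  linarith

theorem copyMarginal_mix {A B K : Type} [Fintype A] [Fintype B] [DecidableEq A] [DecidableEq B]
    [Fintype K] {n : ℕ} (p : K → ℝ)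
    (τ : K → Matrix ((Fin n → A) × (Fin n → B)) ((Fin n → A) × (Fin n → B)) ℂ) (i : Fin n) :
    copyMarginal (∑ k, (p k : ℂ) • τ k) i = ∑ k, (p k : ℂ) • copyMarginal (τ k) i := by
  ext x y
  simp only [copyMarginal, Matrix.sum_apply, Matrix.of_apply, Matrix.smul_apply, Finset.smul_sum]
  rw [Finset.sum_comm]
  rw [Finset.sum_comm' (t' := Finset.univ) (s' := fun _ => Finset.univ) (by simp)]
  conv_rhs => rw [Finset.sum_comm]
  refine Finset.sum_congr rfl fun f _ => ?_
  conv_rhs => rw [Finset.sum_comm]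
  refine Finset.sum_congr rfl fun g _ => ?_
  split_ifs <;> simp

theorem broadcast_mix {A B K : Type} [Fintype A] [Fintype B] [DecidableEq A] [DecidableEq B]
    [Fintype K] {n : ℕ} (p : K → ℝ) (hp : ∀ k, 0 ≤ p k) (hp1 : ∑ k, p k = 1)
    (τ : K → Matrix ((Fin n → A) × (Fin n → B)) ((Fin n → A) × (Fin n → B)) ℂ)
    (ρ : K → Matrix (A × B) (A × B) ℂ) (h : ∀ k, IsBroadcast n (τ k) (ρ k)) :
    IsBroadcast n (∑ k, (p k : ℂ) • τ k) (∑ k, (p k : ℂ) • ρ k) := by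
  refine ⟨⟨mix_psd p hp τ fun k => (h k).1.1, ?_⟩, fun i => ?_⟩
  · rw [Matrix.trace_sum]
    simp only [Matrix.trace_smul, fun k => (h k).1.2, smul_eq_mul, mul_one]
    exact_mod_cast hp1
  · rw [copyMarginal_mix]
    simp only [fun k => (h k).2 i]

theorem sum_prod_pair {A B : Type} [Fintype A] [Fintype B] {n : ℕ}
    (F : Fin n → A × B → ℂ) :
    ∑ f : Fin n → A, ∑ g : Fin n → B, ∏ i, F i (f i, g i) = ∏ i, ∑ z, F i z := by
  classical
  rw [Finset.prod_univ_sum, Fintype.piFinset_univ,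
    ← (Equiv.arrowProdEquivProdArrow (Fin n) (fun _ => A) (fun _ => B)).symm.sum_comp,
    Fintype.sum_prod_type]
  rfl

theorem tpow_broadcast {A B : Type} [Fintype A] [Fintype B] [DecidableEq A] [DecidableEq B]
    (n : ℕ) {ρ : Matrix (A × B) (A × B) ℂ} (h : IsDensity ρ) :
    IsBroadcast n (tpow ρ n) ρ := by
  have htr : ∑ z, ρ z z = 1 := h.2
  refine ⟨⟨?_, ?_⟩, fun k => ?_⟩
  · obtain ⟨C, hC⟩ : ∃ C : Matrix (A × B) (A × B) ℂ, ρ = Cᴴ * C := by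
      open scoped MatrixOrder in
      exact CStarAlgebra.nonneg_iff_eq_star_mul_self.1 h.1.nonneg
    let D : Matrix (Fin n → A × B) ((Fin n → A) × (Fin n → B)) ℂ :=
      Matrix.of fun z x => ∏ i, C (z i) (x.1 i, x.2 i)
    have : tpow ρ n = Dᴴ * D := by
      ext x y
      simp only [tpow, Matrix.of_apply, hC, Matrix.mul_apply, conjTranspose_apply, D, star_prod,
        ← Finset.prod_mul_distrib]
      rw [Finset.prod_univ_sum, Fintype.piFinset_univ]
    rw [this]
    exact posSemidef_conjTranspose_mul_self D
  · simp only [Matrix.trace, Matrix.diag, tpow, Matrix.of_apply, Fintype.sum_prod_type]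
    rw [sum_prod_pair (fun _ z => ρ z z)]
    simp [htr]
  · ext x y
    simp only [copyMarginal, tpow, Matrix.of_apply]
    have e : ∀ (f : Fin n → A) (g : Fin n → B),
        (if f k = x.1 ∧ g k = x.2 then
          ∏ i, ρ (f i, g i) (Function.update f k y.1 i, Function.update g k y.2 i) else 0)
        = ∏ i, (fun i (z : A × B) => if i = k then (if z = x then ρ x y else 0) else ρ z z)
            i (f i, g i) := by
      intro f g
      rw [← Finset.mul_prod_erase _ _ (Finset.mem_univ k),
        ← Finset.mul_prod_erase _ _ (Finset.mem_univ k)]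
      have e2 : ∏ i ∈ Finset.univ.erase k,
          ρ (f i, g i) (Function.update f k y.1 i, Function.update g k y.2 i)
          = ∏ i ∈ Finset.univ.erase k,
            (fun i (z : A × B) => if i = k then (if z = x then ρ x y else 0) else ρ z z)
            i (f i, g i) := by
        refine Finset.prod_congr rfl fun i hi => ?_
        have hik : i ≠ k := Finset.ne_of_mem_erase hi
        simp [hik]
      rw [e2]
      by_cases hc : f k = x.1 ∧ g k = x.2
      · have : (f k, g k) = x := Prod.ext hc.1 hc.2
        simp [hc]
      · have : (f k, g k) ≠ x := fun hh => hc (by simp [← hh])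
        simp [hc, this]
    simp only [e]
    rw [sum_prod_pair (fun i (z : A × B) => if i = k then (if z = x then ρ x y else 0) else ρ z z),
      ← Finset.mul_prod_erase _ _ (Finset.mem_univ k)]
    rw [Finset.prod_eq_one]
    · simp
    · intro i hi
      have hik : i ≠ k := Finset.ne_of_mem_erase hi
      simp [hik, htr]

theorem mutInfo_bdd {A B : Type} [Fintype A] [Fintype B] [DecidableEq A] [DecidableEq B] (n : ℕ)
    (ρ : Matrix (A × B) (A × B) ℂ) :
    BddBelow {x | ∃ τ, IsBroadcast n τ ρ ∧ x = mutInfo τ} := by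
  refine ⟨-((Fintype.card ((Fin n → A) × (Fin n → B)) : ℝ) / Real.log 2), ?_⟩
  rintro x ⟨τ, hτ, rfl⟩
  have h1 := vn_nonneg (ptraceA_density hτ.1)
  have h2 := vn_nonneg (ptraceB_density hτ.1)
  have h3 := vn_le hτ.1
  rw [mutInfo]
  linarith

theorem Ib_mix {A B K : Type} [Fintype A] [Fintype B] [Fintype K]
    [DecidableEq A] [DecidableEq B]
    (p : K → ℝ) (hp : ∀ k, 0 ≤ p k) (hp1 : ∑ k, p k = 1)
    (ρ : K → Matrix (A × B) (A × B) ℂ) (hρ : ∀ k, IsDensity (ρ k)) (n : ℕ) :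
    Ib n (∑ k, (p k : ℂ) • ρ k) ≤ ∑ k, p k * Ib n (ρ k) + 2 * shannon p := by
  refine le_of_forall_pos_le_add fun ε hε => ?_
  have : ∀ k, ∃ τ, IsBroadcast n τ (ρ k) ∧ mutInfo τ < Ib n (ρ k) + ε := fun k => by
    obtain ⟨x, ⟨τ, hτ, rfl⟩, hx⟩ := exists_lt_of_csInf_lt
      (s := {x | ∃ τ, IsBroadcast n τ (ρ k) ∧ x = mutInfo τ})
      ⟨_, tpow (ρ k) n, tpow_broadcast n (hρ k), rfl⟩ (lt_add_of_pos_right (Ib n (ρ k)) hε)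
    exact ⟨τ, hτ, hx⟩
  choose τ hτ hlt using this
  have h1 : Ib n (∑ k, (p k : ℂ) • ρ k) ≤ mutInfo (∑ k, (p k : ℂ) • τ k) :=
    csInf_le (mutInfo_bdd n _) ⟨_, broadcast_mix p hp hp1 τ ρ hτ, rfl⟩
  have h2 := mutInfo_mix p hp hp1 τ fun k => (hτ k).1
  have h3 : ∑ k, p k * mutInfo (τ k) ≤ ∑ k, p k * (Ib n (ρ k) + ε) :=
    Finset.sum_le_sum fun k _ => mul_le_mul_of_nonneg_left (hlt k).le (hp k)
  simp only [mul_add, Finset.sum_add_distrib, ← Finset.sum_mul, hp1, one_mul] at h3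
  linarith

/-- convexity of I_b^{(∞)} (stated via the defining limits). -/
theorem stmt_11 {A B K : Type} [Fintype A] [Fintype B] [Fintype K]
    [DecidableEq A] [DecidableEq B]
    (p : K → ℝ) (hp : ∀ k, 0 ≤ p k) (hp1 : ∑ k, p k = 1)
    (ρ : K → Matrix (A × B) (A × B) ℂ) (hρ : ∀ k, IsDensity (ρ k))
    (L : K → ℝ) (hL : ∀ k, Tendsto (fun n : ℕ => Ib n (ρ k) / n) atTop (nhds (L k)))
    (Lmix : ℝ)
    (hLmix : Tendsto (fun n : ℕ => Ib n (∑ k, (p k : ℂ) • ρ k) / n) atTop (nhds Lmix)) :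
    Lmix ≤ ∑ k, p k * L k := by

  have h1 : Tendsto (fun n : ℕ => ∑ k, p k * (Ib n (ρ k) / n) + 2 * shannon p / n) atTop
      (nhds (∑ k, p k * L k + 0)) :=
    (tendsto_finsetSum _ fun k _ => (hL k).const_mul (p k)).add
      (tendsto_const_div_atTop_nhds_zero_nat _)
  rw [add_zero] at h1
  refine le_of_tendsto_of_tendsto' hLmix h1 fun n => ?_
  have h2 := div_le_div_of_nonneg_right (Ib_mix p hp hp1 ρ hρ n) (Nat.cast_nonneg (α := ℝ) n)
  rw [add_div, Finset.sum_div] at h2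
  simpa only [mul_div_assoc] using h2

end
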